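/- arXiv:1710.09186 — 2 statements merged into one kernel-verified Lean document; each statement's English description precedes it below -/
import Mathlib

section
/- Let K be a field and p, q, r ≥ 2. Let Q⃗_{p,q,r} be the directed quiver obtained from Q_{p,q,r} by deleting the arrows c₁, c₂, c₃, and let 𝒜_{p,q,r} = KQ⃗_{p,q,r}/I⃗_{p,q,r}, where I⃗_{p,q,r} is the two-sided ideal of the path algebra generated by the three quadratic relations a₁b₂, a₂b₁, and a₁b₃ − a₂b₃ (i.e. b₂∘a₁ = 0, b₁∘a₂ = 0, b₃∘(a₁ − a₂) = 0). Then 𝒜_{p,q,r} has global dimension at most 2: for all left 𝒜_{p,q,r}-modules M and N and all integers n ≥ 3, Extⁿ_{𝒜_{p,q,r}}(M, N) = 0. -/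
/-!
The algebra `𝒜 = 𝒜_{p,q,r}` is a quotient of the path algebra of a finite quiver without cycles, so it
is enough to bound the projective dimension of the modules supported at a single vertex: every
module has a finite filtration with such factors, obtained by adding the vertices one at a time
along an order in which all arrows increase (`PD_insert`, `PD_rank`).

On a left module an arrow `u → v` acts as a map from `e_v M` to `e_u M`, and a module supported at
`v` is a direct sum of copies of the simple module `S_v = 𝒜 e_v / rad (𝒜 e_v)`. Hence its projective
dimension is at most one more than that of sums of copies of `rad (𝒜 e_v)`
(`hasProjectiveDimensionLT_of_character`). This radical is spanned by the nontrivial paths ending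
at `v`.

* At `A` the radical vanishes, so sums of `S_A` are projective. At `B` the radical is supported at
  `A`, so the projective dimension is at most one. Therefore all modules supported on `{A, B}` have
  projective dimension at most one.
* At `P₁`, `Q₁`, `R₁` the radical is supported on `{A, B}`, so the projective dimension is at most
  two, whatever the relations are.
* At the other vertices `v` there is one incoming arrow `α : u → v`, and no relation ends in `α`.
  The Fox derivative with respect to `α`, constructed as an entry of an algebra map to `2 × 2`
  matrices (`fox`), is an inverse of right multiplication by `α` from `𝒜 e_u` to `rad (𝒜 e_v)`, so
  this radical is projective (`radL_projective`) and the projective dimension is at most one.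
-/

/-- The vertices of the quiver `Q_{p,q,r}` (and of the directed quiver `Q⃗_{p,q,r}`). -/
inductive QV (p q r : ℕ) : Type where
  | A : QV p q r
  | B : QV p q r
  | P : Fin (p - 1) → QV p q r
  | Q : Fin (q - 1) → QV p q r
  | R : Fin (r - 1) → QV p q r
  deriving DecidableEq, Fintype

/-- The arrows of the directed quiver `Q⃗_{p,q,r}`, i.e. of `Q_{p,q,r}` with the
arrows `c₁, c₂, c₃` deleted. -/
inductive DArrow (p q r : ℕ) : QV p q r → QV p q r → Type where
  | a1 : DArrow p q r QV.A QV.B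
  | a2 : DArrow p q r QV.A QV.B
  | b1 (h : 0 < p - 1) : DArrow p q r QV.B (QV.P ⟨0, h⟩)
  | b2 (h : 0 < q - 1) : DArrow p q r QV.B (QV.Q ⟨0, h⟩)
  | b3 (h : 0 < r - 1) : DArrow p q r QV.B (QV.R ⟨0, h⟩)
  | x (i : ℕ) (h : i + 1 < p - 1) :
      DArrow p q r (QV.P ⟨i, Nat.lt_of_succ_lt h⟩) (QV.P ⟨i + 1, h⟩)
  | y (j : ℕ) (h : j + 1 < q - 1) :
      DArrow p q r (QV.Q ⟨j, Nat.lt_of_succ_lt h⟩) (QV.Q ⟨j + 1, h⟩)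
  | z (k : ℕ) (h : k + 1 < r - 1) :
      DArrow p q r (QV.R ⟨k, Nat.lt_of_succ_lt h⟩) (QV.R ⟨k + 1, h⟩)

/-- Generators of the free algebra presenting the path algebra `K Q⃗_{p,q,r}`. -/
inductive DGen (p q r : ℕ) : Type where
  | vert : QV p q r → DGen p q r
  | arr : {u v : QV p q r} → DArrow p q r u v → DGen p q r

/-- The trivial-path generator `e_v` in the free algebra. -/
noncomputable def Ev (K : Type*) [Field K] {p q r : ℕ} (v : QV p q r) :
    FreeAlgebra K (DGen p q r) :=
  FreeAlgebra.ι K (DGen.vert v)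

/-- The arrow generator in the free algebra. -/
noncomputable def Av (K : Type*) [Field K] {p q r : ℕ} {u v : QV p q r}
    (α : DArrow p q r u v) : FreeAlgebra K (DGen p q r) :=
  FreeAlgebra.ι K (DGen.arr α)

/-- The relations presenting `𝒜_{p,q,r} = K Q⃗_{p,q,r} / I⃗_{p,q,r}`:
the path-algebra relations `e_v e_w = δ_{vw} e_v`, `Σ_v e_v = 1`,
`e_{s(α)} α e_{t(α)} = α` (paths written left to right), together with the
quadratic relations `a₁b₂`, `a₂b₁` and `a₁b₃ − a₂b₃` generating `I⃗_{p,q,r}`. -/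
inductive Drel (K : Type*) [Field K] (p q r : ℕ) :
    FreeAlgebra K (DGen p q r) → FreeAlgebra K (DGen p q r) → Prop where
  | idem (v : QV p q r) : Drel K p q r (Ev K v * Ev K v) (Ev K v)
  | orth (v w : QV p q r) (h : v ≠ w) : Drel K p q r (Ev K v * Ev K w) 0
  | total : Drel K p q r (∑ v : QV p q r, Ev K v) 1
  | comp {u v : QV p q r} (α : DArrow p q r u v) :
      Drel K p q r (Ev K u * Av K α * Ev K v) (Av K α)
  | rel1 (hq' : 0 < q - 1) :
      Drel K p q r (Av K DArrow.a1 * Av K (DArrow.b2 hq')) 0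
  | rel2 (hp' : 0 < p - 1) :
      Drel K p q r (Av K DArrow.a2 * Av K (DArrow.b1 hp')) 0
  | rel3 (hr' : 0 < r - 1) :
      Drel K p q r (Av K DArrow.a1 * Av K (DArrow.b3 hr')
        - Av K DArrow.a2 * Av K (DArrow.b3 hr')) 0

/-- The algebra `𝒜_{p,q,r} = K Q⃗_{p,q,r} / I⃗_{p,q,r}`. -/
noncomputable abbrev DirAlgebra (K : Type*) [Field K] (p q r : ℕ) : Type _ :=
  RingQuot (Drel K p q r)

namespace DirAlgebra

open CategoryTheory

/-! ### Modules on which an algebra acts through a character -/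

section Generic

universe u w

variable {K : Type u} [Field K] {R : Type u} [Ring R] [Algebra K R]

lemma finsupp_projective {R P : Type*} [Ring R] [AddCommGroup P] [Module R P]
    [Module.Projective R P] (ι : Type*) : Module.Projective R (ι →₀ P) := by
  classical
  exact Module.Projective.of_equiv' (finsuppLequivDFinsupp (R := R) (ι := ι) (M := P)).symm

/-- The left ideal `R ε`, for an idempotent `ε`. -/
def idemIdeal (ε : R) : Submodule R R where
  carrier := {a | a * ε = a}
  zero_mem' := by simp
  add_mem' {a b} (ha : _ = _) (hb : _ = _) := by simp [add_mul, ha, hb]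
  smul_mem' c a (ha : _ = _) := by simp [mul_assoc, ha]

/-- The kernel of the character `χ` on the left ideal `R ε`. -/
def idemKer (χ : R →ₐ[K] K) (ε : R) : Submodule R R where
  carrier := {a | a * ε = a ∧ χ a = 0}
  zero_mem' := by simp
  add_mem' {a b} ha hb := by simp [add_mul, ha.1, hb.1, ha.2, hb.2]
  smul_mem' c a ha := by simp [mul_assoc, ha.1, ha.2]

lemma idemKer_le (χ : R →ₐ[K] K) (ε : R) : idemKer χ ε ≤ idemIdeal ε := fun _ h => h.1

lemma idemIdeal_projective {ε : R} (hε : ε * ε = ε) : Module.Projective R (idemIdeal ε) := by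
  refine Module.Projective.of_split (idemIdeal ε).subtype
    ((LinearMap.toSpanSingleton R R ε).codRestrict (idemIdeal ε) fun a => ?_) ?_
  · change a * ε * ε = a * ε
    rw [mul_assoc, hε]
  · ext ⟨a, ha⟩
    simpa using (show a * ε = a from ha)

/-- The direct sum of `ι` copies of `R ε ∩ ker χ`. -/
noncomputable def kerCopies (χ : R →ₐ[K] K) (ε : R) (ι : Type max u w) :
    ModuleCat.{max u w} R :=
  ModuleCat.of R (ι →₀ idemKer χ ε)

lemma kerCopies_projective {χ : R →ₐ[K] K} {ε : R} (h : Module.Projective R (idemKer χ ε))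
    (ι : Type max u w) : Projective (kerCopies.{u, w} χ ε ι) := by
  have := finsupp_projective (R := R) (P := idemKer χ ε) ι
  exact ModuleCat.projective_of_categoryTheory_projective
    (ModuleCat.of.{max u w} R (ι →₀ idemKer χ ε))

lemma smul_kerCopies {χ : R →ₐ[K] K} {ε a : R} (h : ∀ x ∈ idemKer χ ε, a * x = 0)
    (ι : Type max u w) (m : kerCopies.{u, w} χ ε ι) : a • m = 0 := by
  let m' : ι →₀ idemKer χ ε := m
  have : a • m' = 0 := Finsupp.ext fun i => Subtype.ext (h _ (m' i).2)
  exact this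

/-- If `R` acts on `M` through a character `χ` with `χ ε = 1`, then `M` is a direct sum of copies
of the simple module `R ε / (R ε ∩ ker χ)`; the corresponding sum of the sequences
`0 → R ε ∩ ker χ → R ε → K → 0` bounds its projective dimension. -/
lemma hasProjectiveDimensionLT_of_character (χ : R →ₐ[K] K) {ε : R} (hε : ε * ε = ε)
    (hχ : χ ε = 1) (M : ModuleCat.{max u w} R)
    (hM : ∀ (a : R) (m : M), a • m = algebraMap K R (χ a) • m) (k : ℕ)
    (h : ∀ ι : Type max u w, HasProjectiveDimensionLT (kerCopies.{u, w} χ ε ι) k) :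
    HasProjectiveDimensionLT M (k + 1) := by
  let _ : Module K M := Module.restrictScalars K R M
  have : IsScalarTower K R M :=
    IsScalarTower.restrictScalars K R M
  let b := Module.Basis.ofVectorSpace K M
  let ι := Module.Basis.ofVectorSpaceIndex K M
  let f : (ι →₀ idemKer χ ε) →ₗ[R] (ι →₀ idemIdeal ε) :=
    Finsupp.mapRange.linearMap (Submodule.inclusion (idemKer_le χ ε))
  let g : (ι →₀ idemIdeal ε) →ₗ[R] M :=
    Finsupp.lsum ℕ fun i => (LinearMap.toSpanSingleton R M (b i)).comp
      (idemIdeal ε).subtype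
  let c : (ι →₀ idemIdeal ε) → (ι →₀ K) :=
    fun x => Finsupp.mapRange (fun a : idemIdeal ε => χ a.1) (by simp) x
  have hg (x : ι →₀ idemIdeal ε) : g x = Finsupp.linearCombination K b (c x) := by
    simp only [g, c, Finsupp.lsum_apply, Finsupp.linearCombination_apply]
    rw [Finsupp.sum_mapRange_index (by simp)]
    refine Finsupp.sum_congr fun i _ => ?_
    simp only [LinearMap.comp_apply, Submodule.subtype_apply, LinearMap.toSpanSingleton_apply]
    rw [hM, algebraMap_smul]
  have hg0 (x : ι →₀ idemIdeal ε) : g x = 0 ↔ ∀ i, χ (x i).1 = 0 := by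
    rw [hg, ← map_zero (Finsupp.linearCombination K b), b.linearIndependent.eq_iff,
      Finsupp.ext_iff]
    simp [c]
  have hex : Function.Exact f g := by
    intro x
    rw [hg0]
    constructor
    · intro hx
      refine ⟨Finsupp.onFinset x.support (fun i => ⟨(x i).1, (x i).2, hx i⟩) ?_, ?_⟩
      · intro i hi
        rw [Finsupp.mem_support_iff]
        rintro h0
        apply hi
        ext
        simp [h0]
      · ext i
        simp [f]
    · rintro ⟨y, rfl⟩ i
      exact (y i).2.2
  let S : ShortComplex (ModuleCat.{max u w} R) :=
    { f := ModuleCat.ofHom.{max u w} f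
      g := ModuleCat.ofHom.{max u w} g
      zero := ModuleCat.hom_ext hex.linearMap_comp_eq_zero }
  have hS : S.ShortExact := by
    refine ModuleCat.shortComplex_shortExact S hex ?_ ?_
    · exact Finsupp.mapRange_injective _ (by simp) (Submodule.inclusion_injective _)
    · intro m
      let l : K → idemIdeal ε := fun a => ⟨algebraMap K _ a * ε, by
        change _ * _ * _ = _; rw [mul_assoc, hε]⟩
      refine ⟨Finsupp.mapRange l (by ext; simp [l]) (b.repr m), ?_⟩
      change g _ = m
      rw [hg]
      conv_rhs => rw [← b.linearCombination_repr m]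
      congr 1
      ext i
      simp [c, l, hχ]
  have := idemIdeal_projective hε
  have := finsupp_projective (R := R) (P := idemIdeal ε) ι
  have : Projective S.X₂ :=
    ModuleCat.projective_of_categoryTheory_projective (ModuleCat.of.{max u w} _ (ι →₀ idemIdeal ε))
  exact hS.hasProjectiveDimensionLT_X₃ k (h ι)
    (hasProjectiveDimensionLT_of_ge _ 1 _ (by omega))

end Generic

/-! ### Generators and relations -/

section Algebra

variable (K : Type*) [Field K] {p q r : ℕ}

/-- The class of the trivial path `e_v` in `𝒜_{p,q,r}`. -/
noncomputable def e (v : QV p q r) : DirAlgebra K p q r :=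
  RingQuot.mkAlgHom K (Drel K p q r) (Ev K v)

/-- The class of an arrow in `𝒜_{p,q,r}`. -/
noncomputable def ar {u v : QV p q r} (α : DArrow p q r u v) : DirAlgebra K p q r :=
  RingQuot.mkAlgHom K (Drel K p q r) (Av K α)

lemma e_mul_self (v : QV p q r) : e K v * e K v = e K v := by
  simpa [e] using RingQuot.mkAlgHom_rel K (Drel.idem (K := K) v)

lemma e_mul_ne {v w : QV p q r} (h : v ≠ w) : e K v * e K w = 0 := by
  simpa [e] using RingQuot.mkAlgHom_rel K (Drel.orth (K := K) v w h)

lemma sum_e : ∑ v : QV p q r, e K v = 1 := by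
  simpa [e] using RingQuot.mkAlgHom_rel K (Drel.total (K := K) (p := p) (q := q) (r := r))

lemma e_ar_e {u v : QV p q r} (α : DArrow p q r u v) : e K u * ar K α * e K v = ar K α := by
  simpa [e, ar] using RingQuot.mkAlgHom_rel K (Drel.comp (K := K) α)

lemma ar_a1_b2 (h : 0 < q - 1) :
    ar K (DArrow.a1 : DArrow p q r _ _) * ar K (DArrow.b2 h) = 0 := by
  simpa [ar] using RingQuot.mkAlgHom_rel K (Drel.rel1 (K := K) (p := p) (q := q) (r := r) h)

lemma ar_a2_b1 (h : 0 < p - 1) :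
    ar K (DArrow.a2 : DArrow p q r _ _) * ar K (DArrow.b1 h) = 0 := by
  simpa [ar] using RingQuot.mkAlgHom_rel K (Drel.rel2 (K := K) (p := p) (q := q) (r := r) h)

lemma ar_a1_b3 (h : 0 < r - 1) :
    ar K (DArrow.a1 : DArrow p q r _ _) * ar K (DArrow.b3 h) =
      ar K (DArrow.a2 : DArrow p q r _ _) * ar K (DArrow.b3 h) := by
  simpa [ar, sub_eq_zero] using
    RingQuot.mkAlgHom_rel K (Drel.rel3 (K := K) (p := p) (q := q) (r := r) h)

lemma e_mul_ar {u v : QV p q r} (α : DArrow p q r u v) : e K u * ar K α = ar K α := by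
  rw [← e_ar_e, ← mul_assoc, ← mul_assoc, e_mul_self]

lemma ar_mul_e {u v : QV p q r} (α : DArrow p q r u v) : ar K α * e K v = ar K α := by
  rw [← e_ar_e, mul_assoc, e_mul_self]

lemma e_mul_ar_ne {u v w : QV p q r} (α : DArrow p q r u v) (h : w ≠ u) :
    e K w * ar K α = 0 := by
  rw [← e_mul_ar, ← mul_assoc, e_mul_ne K h, zero_mul]

lemma ar_mul_e_ne {u v w : QV p q r} (α : DArrow p q r u v) (h : v ≠ w) :
    ar K α * e K w = 0 := by
  rw [← ar_mul_e, mul_assoc, e_mul_ne K h, mul_zero]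

variable {K}

/-- Induction over the generators of `𝒜_{p,q,r}`. -/
@[elab_as_elim]
lemma induction {C : DirAlgebra K p q r → Prop}
    (scalar : ∀ c : K, C (algebraMap K _ c)) (vert : ∀ v, C (e K v))
    (arr : ∀ {u v : QV p q r} (α : DArrow p q r u v), C (ar K α))
    (mul : ∀ a b, C a → C b → C (a * b)) (add : ∀ a b, C a → C b → C (a + b))
    (a : DirAlgebra K p q r) : C a := by
  obtain ⟨a, rfl⟩ := RingQuot.mkAlgHom_surjective K (Drel K p q r) a
  induction a using FreeAlgebra.induction with
  | grade0 c => simpa using scalar c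
  | grade1 g =>
    cases g with
    | vert v => exact vert v
    | arr α => exact arr α
  | mul a b ha hb => simpa using mul _ _ ha hb
  | add a b ha hb => simpa using add _ _ ha hb

lemma no_loop {u v : QV p q r} (α : DArrow p q r u v) : u ≠ v := by
  cases α <;> simp

/-! ### Characters and Fox derivatives -/

variable (K) in
/-- The character `𝒜_{p,q,r} → K` of the simple module at the vertex `v`: it sends `e_v` to `1`
and kills the other trivial paths and all arrows. -/
noncomputable def chi (v : QV p q r) : DirAlgebra K p q r →ₐ[K] K :=
  RingQuot.liftAlgHom K ⟨FreeAlgebra.lift K fun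
    | DGen.vert w => if w = v then 1 else 0
    | DGen.arr _ => 0, by
    intro x y h
    induction h with
    | idem w => simp [Ev]
    | orth w w' h =>
      simp only [Ev, map_mul, FreeAlgebra.lift_ι_apply, map_zero]
      split_ifs <;> simp_all
    | total => simp [Ev]
    | comp α => simp [Av]
    | rel1 => simp [Av]
    | rel2 => simp [Av]
    | rel3 => simp [Av]⟩

lemma chi_e (v w : QV p q r) : chi K v (e K w) = if w = v then 1 else 0 := by
  simp [chi, e, Ev]

lemma chi_e_self (v : QV p q r) : chi K v (e K v) = 1 := by
  simp [chi_e]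

lemma chi_ar (w : QV p q r) {u v : QV p q r} (α : DArrow p q r u v) :
    chi K w (ar K α) = 0 := by
  simp [chi, ar, Av]

open Classical in
/-- The off-diagonal coefficient attached to an arrow `β` in `fox`: it is `e_u` if `β` is the
distinguished arrow `α : u → v`, and `0` otherwise. -/
noncomputable def coef {u v : QV p q r} (α : DArrow p q r u v) {s t : QV p q r}
    (β : DArrow p q r s t) : DirAlgebra K p q r :=
  if DGen.arr β = DGen.arr α then e K u else 0

/-- The algebra map `a ↦ !![a, ψ a; 0, χ_v a]`, for an arrow `α : u → v` that is not the last arrow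
of a relation. Its off-diagonal entry `ψ` is the Fox derivative with respect to `α`: it picks the
paths ending in `α` and removes this last arrow. -/
noncomputable def fox {u v : QV p q r} (α : DArrow p q r u v)
    (h₁ : ∀ h, DGen.arr (DArrow.b1 h) ≠ DGen.arr α)
    (h₂ : ∀ h, DGen.arr (DArrow.b2 h) ≠ DGen.arr α)
    (h₃ : ∀ h, DGen.arr (DArrow.b3 h) ≠ DGen.arr α) :
    DirAlgebra K p q r →ₐ[K] Matrix (Fin 2) (Fin 2) (DirAlgebra K p q r) :=
  RingQuot.liftAlgHom K ⟨FreeAlgebra.lift K fun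
    | DGen.vert w => !![e K w, 0; 0, if w = v then 1 else 0]
    | DGen.arr β => !![ar K β, coef α β; 0, 0], by
    intro x y h
    induction h with
    | idem w =>
      simp only [Ev, map_mul, FreeAlgebra.lift_ι_apply, Matrix.mul_fin_two]
      ext i j
      fin_cases i <;> fin_cases j <;> simp [e_mul_self]
      tauto
    | orth w w' h =>
      simp only [Ev, map_mul, FreeAlgebra.lift_ι_apply, map_zero, Matrix.mul_fin_two]
      ext i j
      fin_cases i <;> fin_cases j <;> simp [e_mul_ne K h]
      rintro rfl rfl
      exact (h rfl).elim
    | total =>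
      simp only [Ev, map_sum, FreeAlgebra.lift_ι_apply, map_one]
      ext i j
      fin_cases i <;> fin_cases j <;> simp [Matrix.sum_apply, sum_e]
    | @comp s t β =>
      simp only [Ev, Av, map_mul, FreeAlgebra.lift_ι_apply, Matrix.mul_fin_two]
      ext i j
      fin_cases i <;> fin_cases j <;> simp [e_ar_e]
      by_cases hβ : DGen.arr β = DGen.arr α
      · cases hβ
        simp [coef, e_mul_self]
      · simp [coef, hβ]
    | rel1 h =>
      simp only [Av, map_mul, FreeAlgebra.lift_ι_apply, map_zero, Matrix.mul_fin_two]
      ext i j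
      fin_cases i <;> fin_cases j <;> simp [coef, h₂, ar_a1_b2]
    | rel2 h =>
      simp only [Av, map_mul, FreeAlgebra.lift_ι_apply, map_zero, Matrix.mul_fin_two]
      ext i j
      fin_cases i <;> fin_cases j <;> simp [coef, h₁, ar_a2_b1]
    | rel3 h =>
      simp only [Av, map_mul, map_sub, FreeAlgebra.lift_ι_apply, map_zero, Matrix.mul_fin_two]
      ext i j
      fin_cases i <;> fin_cases j <;> simp [coef, h₃, ar_a1_b3]⟩

section Fox

variable {u v : QV p q r} (α : DArrow p q r u v)
    (h₁ : ∀ h, DGen.arr (DArrow.b1 h) ≠ DGen.arr α)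
    (h₂ : ∀ h, DGen.arr (DArrow.b2 h) ≠ DGen.arr α)
    (h₃ : ∀ h, DGen.arr (DArrow.b3 h) ≠ DGen.arr α)

lemma fox_e (w : QV p q r) :
    fox (K := K) α h₁ h₂ h₃ (e K w) = !![e K w, 0; 0, if w = v then 1 else 0] := by
  simp [fox, e, Ev]

lemma fox_ar {s t : QV p q r} (β : DArrow p q r s t) :
    fox (K := K) α h₁ h₂ h₃ (ar K β) = !![ar K β, coef α β; 0, 0] := by
  simp [fox, ar, Av]

lemma fox_entries (a : DirAlgebra K p q r) :
    fox α h₁ h₂ h₃ a 0 0 = a ∧ fox α h₁ h₂ h₃ a 1 0 = 0 ∧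
      fox α h₁ h₂ h₃ a 1 1 = algebraMap K _ (chi K v a) := by
  induction a using induction with
  | scalar c => simp [Matrix.algebraMap_matrix_apply]
  | vert w => by_cases h : w = v <;> simp [fox_e, chi_e, h]
  | arr β => simp [fox_ar, chi_ar]
  | mul a b ha hb => simp [Matrix.mul_apply, ha, hb]
  | add a b ha hb => simp [ha, hb]

lemma fox_mul (a b : DirAlgebra K p q r) :
    fox α h₁ h₂ h₃ (a * b) 0 1 =
      a * fox α h₁ h₂ h₃ b 0 1 + fox α h₁ h₂ h₃ a 0 1 * algebraMap K _ (chi K v b) := by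
  simp [Matrix.mul_apply, fox_entries]

/-- If `α : u → v` is the only arrow ending at `v`, the paths ending at `v` are `e_v` and those
ending in `α`. -/
lemma mul_e_eq (huniq : ∀ {s : QV p q r} (β : DArrow p q r s v), DGen.arr β = DGen.arr α)
    (a : DirAlgebra K p q r) :
    a * e K v = algebraMap K _ (chi K v a) * e K v + fox α h₁ h₂ h₃ a 0 1 * ar K α := by
  induction a using induction with
  | scalar c => simp [Matrix.algebraMap_matrix_apply]
  | vert w =>
    by_cases h : w = v
    · subst h; simp [fox_e, chi_e, e_mul_self]
    · simp [fox_e, chi_e, h, e_mul_ne]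
  | @arr s t β =>
    by_cases h : t = v
    · subst h
      have := huniq β
      cases this
      simp [fox_ar, chi_ar, coef, e_mul_ar, ar_mul_e]
    · have : DGen.arr β ≠ DGen.arr α := by
        intro h'
        cases h'
        exact h rfl
      simp [fox_ar, chi_ar, coef, this, ar_mul_e_ne K β h]
  | mul a b ha hb =>
    rw [mul_assoc, hb, mul_add, ← mul_assoc, ← Algebra.commutes, mul_assoc, ha, fox_mul, map_mul,
      map_mul, ← Algebra.commutes (chi K v b) (fox α h₁ h₂ h₃ a 0 1),
      ← Algebra.commutes (chi K v b) (algebraMap K _ (chi K v a))]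
    noncomm_ring
  | add a b ha hb =>
    simp only [add_mul, ha, hb, map_add, Matrix.add_apply]
    abel

end Fox

/-! ### Supports of modules -/

/-- A set of vertices is lower if it contains the source of every arrow ending in it. Left
multiplication by an arrow moves from the end vertex to the source, so these are the sets on which
modules restrict to submodules. -/
def IsLower (S : Set (QV p q r)) : Prop :=
  ∀ {s t : QV p q r}, DArrow p q r s t → t ∈ S → s ∈ S

/-- The elements of `M` supported on the lower set `S` form a submodule. -/
def suppSub {S : Set (QV p q r)} (hS : IsLower S) (M : Type*) [AddCommGroup M]
    [Module (DirAlgebra K p q r) M] : Submodule (DirAlgebra K p q r) M where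
  carrier := {m | ∀ w ∉ S, e K w • m = 0}
  zero_mem' := by simp
  add_mem' ha hb w hw := by simp [ha w hw, hb w hw]
  smul_mem' a := by
    simp only [Set.mem_ofPred_eq]
    induction a using induction with
    | scalar c =>
      intro m hm w hw
      rw [← mul_smul, ← Algebra.commutes, mul_smul, hm w hw, smul_zero]
    | vert v =>
      intro m hm w hw
      by_cases h : w = v
      · subst h; rw [hm w hw, smul_zero]
      · rw [← mul_smul, e_mul_ne K h, zero_smul]
    | @arr s t β =>
      intro m hm w hw
      by_cases h : w = s
      · subst h
        rw [← ar_mul_e, mul_smul, hm t (fun ht => hw (hS β ht)), smul_zero, smul_zero]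
      · rw [← mul_smul, e_mul_ar_ne K β h, zero_smul]
    | mul a b ha hb => intro m hm; rw [mul_smul]; exact ha (hb hm)
    | add a b ha hb =>
      intro m hm w hw; rw [add_smul, smul_add, ha hm w hw, hb hm w hw, add_zero]

lemma mem_suppSub {S : Set (QV p q r)} (hS : IsLower S) {M : Type*} [AddCommGroup M]
    [Module (DirAlgebra K p q r) M] {m : M} :
    m ∈ suppSub (K := K) hS M ↔ ∀ w ∉ S, e K w • m = 0 := Iff.rfl

/-- If all arrows ending at `v` start in the lower set `S`, the nontrivial paths ending at `v`
start in `S`. -/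
lemma mul_e_sub_mem {S : Set (QV p q r)} (hS : IsLower S) {v : QV p q r}
    (hv : ∀ {s : QV p q r}, DArrow p q r s v → s ∈ S) (a : DirAlgebra K p q r) :
    a * e K v - algebraMap K _ (chi K v a) * e K v ∈
      suppSub (K := K) hS (DirAlgebra K p q r) := by
  induction a using induction with
  | scalar c => simp
  | vert w =>
    by_cases h : w = v
    · subst h; simp [chi_e, e_mul_self]
    · simp [chi_e, h, e_mul_ne]
  | @arr s t β =>
    by_cases h : t = v
    · subst h
      simp only [ar_mul_e, chi_ar, map_zero, zero_mul, sub_zero]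
      intro w hw
      exact e_mul_ar_ne K β (fun hws => hw (hws ▸ hv β))
    · simp [chi_ar, ar_mul_e_ne K β h]
  | mul a b ha hb =>
    have : a * b * e K v - algebraMap K _ (chi K v (a * b)) * e K v =
        a • (b * e K v - algebraMap K _ (chi K v b) * e K v) +
        algebraMap K (DirAlgebra K p q r) (chi K v b) •
          (a * e K v - algebraMap K _ (chi K v a) * e K v) := by
      simp only [smul_eq_mul, mul_sub, map_mul, ← mul_assoc]
      rw [← Algebra.commutes (chi K v b) a,
        ← Algebra.commutes (chi K v b) (algebraMap K _ (chi K v a))]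
      abel
    rw [this]
    exact add_mem (Submodule.smul_mem _ _ hb) (Submodule.smul_mem _ _ ha)
  | add a b ha hb =>
    have := add_mem ha hb
    simp only [map_add, add_mul] at this ⊢
    convert this using 1
    abel

section Modules

variable {M : Type*} [AddCommGroup M] [Module (DirAlgebra K p q r) M]

lemma e_smul_of_supp {v : QV p q r} (hM : ∀ w ≠ v, ∀ m : M, e K w • m = 0) (m : M) :
    e K v • m = m := by
  conv_rhs => rw [← one_smul (DirAlgebra K p q r) m, ← sum_e, Finset.sum_smul]
  rw [Finset.sum_eq_single v (fun w _ hw => hM w hw m) (by simp)]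

/-- On a module supported at `v` the algebra acts through the character of `v`. -/
lemma smul_of_supp {v : QV p q r} (hM : ∀ w ≠ v, ∀ m : M, e K w • m = 0)
    (a : DirAlgebra K p q r) :
    ∀ m : M, a • m = algebraMap K (DirAlgebra K p q r) (chi K v a) • m := by
  induction a using induction with
  | scalar c => simp
  | vert w =>
    intro m
    by_cases h : w = v
    · subst h; simp [chi_e, e_smul_of_supp hM]
    · simp [chi_e, h, hM w h]
  | @arr s t β =>
    intro m
    simp only [chi_ar, map_zero, zero_smul]
    by_cases h : t = v
    · subst h
      rw [← e_mul_ar, mul_smul, hM s (no_loop β)]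
    · rw [← ar_mul_e, mul_smul, hM t h, smul_zero]
  | mul a b ha hb =>
    intro m
    rw [mul_smul, hb m, ha, ← mul_smul, map_mul, map_mul]
  | add a b ha hb =>
    intro m
    rw [add_smul, ha, hb, map_add, map_add, add_smul]

end Modules

/-! ### The radical of `𝒜 e_v` -/

variable (K) in
/-- The radical of the indecomposable projective left module `𝒜 e_v`. -/
noncomputable abbrev radL (v : QV p q r) :=
  idemKer (chi K v) (e K v)

/-- If `α : u → v` is the only arrow ending at `v` and no relation ends in `α`, then
`rad (𝒜 e_v) = 𝒜 α ≅ 𝒜 e_u`; the inverse isomorphism is the Fox derivative. -/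
lemma radL_projective {u v : QV p q r} (α : DArrow p q r u v)
    (h₁ : ∀ h, DGen.arr (DArrow.b1 h) ≠ DGen.arr α)
    (h₂ : ∀ h, DGen.arr (DArrow.b2 h) ≠ DGen.arr α)
    (h₃ : ∀ h, DGen.arr (DArrow.b3 h) ≠ DGen.arr α)
    (huniq : ∀ {s : QV p q r} (β : DArrow p q r s v), DGen.arr β = DGen.arr α) :
    Module.Projective (DirAlgebra K p q r) (radL K v) := by
  -- On the kernel of `chi K v` the twisted Leibniz rule `fox_mul` becomes left linearity.
  let i : radL K v →ₗ[DirAlgebra K p q r] DirAlgebra K p q r :=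
    { toFun := fun a => fox α h₁ h₂ h₃ a.1 0 1
      map_add' := by simp
      map_smul' := by
        rintro c ⟨a, ha⟩
        simp [fox_mul, ha.2] }
  refine Module.Projective.of_split i
    ((LinearMap.toSpanSingleton (DirAlgebra K p q r) (DirAlgebra K p q r) (ar K α)).codRestrict
      (radL K v) fun a => ⟨?_, ?_⟩) ?_
  · simp [mul_assoc, ar_mul_e]
  · simp [chi_ar]
  · ext ⟨a, ha⟩
    have := mul_e_eq α h₁ h₂ h₃ huniq a
    simp only [ha.1, ha.2, map_zero, zero_mul, zero_add] at this
    exact this.symm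

end Algebra

/-! ### Projective dimension -/

section Dimension

universe u w

variable {K : Type u} [Field K] {p q r : ℕ}

variable (K) in
/-- Every module supported on `S` has projective dimension less than `k`. -/
def PD (S : Set (QV p q r)) (k : ℕ) : Prop :=
  ∀ M : ModuleCat.{max u w} (DirAlgebra K p q r),
    (∀ v ∉ S, ∀ m : M, e K v • m = 0) → HasProjectiveDimensionLT M k

lemma PD.mono {S : Set (QV p q r)} {k l : ℕ} (h : PD.{u, w} K S k) (hkl : k ≤ l) :
    PD.{u, w} K S l := fun M hM =>
  have := h M hM
  hasProjectiveDimensionLT_of_ge M k l hkl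

lemma PD_empty : PD.{u, w} K (∅ : Set (QV p q r)) 0 := by
  intro M hM
  apply Limits.IsZero.hasProjectiveDimensionLT_zero
  rw [ModuleCat.isZero_iff_subsingleton]
  refine ⟨fun a b => ?_⟩
  have (m : M) : m = 0 := by
    rw [← one_smul (DirAlgebra K p q r) m, ← sum_e, Finset.sum_smul]
    exact Finset.sum_eq_zero fun v _ => hM v (by simp) m
  rw [this a, this b]

lemma PD_singleton_of_radL (v : QV p q r) (k : ℕ)
    (h : ∀ ι : Type max u w, HasProjectiveDimensionLT
      (kerCopies.{u, w} (chi K v) (e K v) ι) k) :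
    PD.{u, w} K {v} (k + 1) := fun M hM =>
  hasProjectiveDimensionLT_of_character (chi K v) (e_mul_self K v) (chi_e_self v) M
    (smul_of_supp fun w hw => hM w (by simpa using hw)) k h

/-- The case of a vertex with one incoming arrow, on which no relation ends: there the radical of
`𝒜 e_v` is projective. -/
lemma PD_singleton_of_arrow {u v : QV p q r} (α : DArrow p q r u v)
    (h₁ : ∀ h, DGen.arr (DArrow.b1 h) ≠ DGen.arr α)
    (h₂ : ∀ h, DGen.arr (DArrow.b2 h) ≠ DGen.arr α)
    (h₃ : ∀ h, DGen.arr (DArrow.b3 h) ≠ DGen.arr α)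
    (huniq : ∀ {s : QV p q r} (β : DArrow p q r s v), DGen.arr β = DGen.arr α) :
    PD.{u, w} K {v} 2 := by
  refine PD_singleton_of_radL v 1 fun ι => ?_
  rw [← projective_iff_hasProjectiveDimensionLT_one]
  exact kerCopies_projective (radL_projective (K := K) α h₁ h₂ h₃ huniq) ι

/-- If all arrows into `v` start in a lower set `S`, then the radical of `𝒜 e_v` is supported
on `S`. -/
lemma PD_singleton_of_lower {S : Set (QV p q r)} (hS : IsLower S) {v : QV p q r}
    (hv : ∀ {s : QV p q r}, DArrow p q r s v → s ∈ S) {k : ℕ} (h : PD.{u, w} K S k) :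
    PD.{u, w} K {v} (k + 1) := by
  refine PD_singleton_of_radL v k fun ι => h _ fun w hw => smul_kerCopies (fun x hx => ?_) ι
  have := mul_e_sub_mem hS hv x w hw
  rw [hx.1, hx.2] at this
  simpa using this

/-- A module `M` supported on `S ∪ {v}` is an extension of a module supported at `v` by its
submodule of elements supported on `S`. -/
lemma PD_insert {S : Set (QV p q r)} (hS : IsLower S) {v : QV p q r} {k : ℕ}
    (h : PD.{u, w} K S k) (h' : PD.{u, w} K {v} k) : PD.{u, w} K (insert v S) k := by
  intro M hM
  let N := suppSub (K := K) hS M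
  let T := ModuleCat.shortComplexOfCompEqZero N.subtype N.mkQ (by ext; simp)
  have hT : T.ShortExact := by
    refine ModuleCat.shortComplex_shortExact T ?_ N.injective_subtype N.mkQ_surjective
    exact LinearMap.exact_subtype_mkQ N
  refine hT.hasProjectiveDimensionLT_X₂ k (h _ ?_) (h' _ ?_)
  · intro w hw m
    change (e K w • m : N) = 0
    ext
    exact m.2 w hw
  · intro w hw m
    obtain ⟨m, rfl⟩ := N.mkQ_surjective m
    change e K w • N.mkQ m = 0
    rw [← map_smul, Submodule.mkQ_apply, Submodule.Quotient.mk_eq_zero]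
    intro w' hw'
    by_cases hwS : w ∈ S
    · rw [← mul_smul, e_mul_ne K (ne_of_mem_of_not_mem hwS hw').symm, zero_smul]
    · rw [hM w (by simp_all), smul_zero]

lemma PD_A : PD.{u, w} K ({QV.A} : Set (QV p q r)) 1 :=
  PD_singleton_of_lower (S := ∅) (fun _ h => h) (fun α => by cases α) PD_empty

lemma isLower_A : IsLower ({QV.A} : Set (QV p q r)) := by
  rintro s t α rfl
  cases α

lemma PD_B : PD.{u, w} K ({QV.B} : Set (QV p q r)) 2 :=
  PD_singleton_of_lower isLower_A (fun α => by cases α <;> simp) PD_A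

lemma isLower_BA : IsLower ({QV.B, QV.A} : Set (QV p q r)) := by
  rintro s t α (rfl | rfl) <;> cases α <;> simp

lemma PD_BA : PD.{u, w} K ({QV.B, QV.A} : Set (QV p q r)) 2 :=
  PD_insert isLower_A (PD_A.mono (by omega)) PD_B

lemma PD_singleton (v : QV p q r) : PD.{u, w} K {v} 3 := by
  match v with
  | QV.A => exact PD_A.mono (by omega)
  | QV.B => exact PD_B.mono (by omega)
  | QV.P ⟨0, h⟩ =>
    exact PD_singleton_of_lower isLower_BA (fun α => by cases α; simp) PD_BA
  | QV.Q ⟨0, h⟩ =>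
    exact PD_singleton_of_lower isLower_BA (fun α => by cases α; simp) PD_BA
  | QV.R ⟨0, h⟩ =>
    exact PD_singleton_of_lower isLower_BA (fun α => by cases α; simp) PD_BA
  | QV.P ⟨i + 1, h⟩ =>
    exact (PD_singleton_of_arrow (DArrow.x i h) nofun nofun nofun
      (fun β => by cases β; rfl)).mono (by omega)
  | QV.Q ⟨i + 1, h⟩ =>
    exact (PD_singleton_of_arrow (DArrow.y i h) nofun nofun nofun
      (fun β => by cases β; rfl)).mono (by omega)
  | QV.R ⟨i + 1, h⟩ =>
    exact (PD_singleton_of_arrow (DArrow.z i h) nofun nofun nofun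
      (fun β => by cases β; rfl)).mono (by omega)

/-- An enumeration of the vertices along which all arrows increase. -/
def rank : QV p q r → ℕ
  | QV.A => 0
  | QV.B => 1
  | QV.P i => 2 + i
  | QV.Q j => 2 + p + j
  | QV.R k => 2 + p + q + k

lemma rank_injective : Function.Injective (rank : QV p q r → ℕ) := by
  intro a b h
  cases a <;> cases b <;> simp only [rank] at h <;> first | rfl | (congr 1; ext; omega) | omega

lemma rank_lt {s t : QV p q r} (α : DArrow p q r s t) : rank s < rank t := by
  cases α <;> simp only [rank] <;> omega

lemma PD_rank (n : ℕ) : PD.{u, w} K {v : QV p q r | rank v < n} 3 := by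
  induction n with
  | zero => simpa using PD_empty.mono (by omega)
  | succ n ih =>
    by_cases h : ∃ v : QV p q r, rank v = n
    · obtain ⟨v, hv⟩ := h
      have : {v : QV p q r | rank v < n + 1} = insert v {v : QV p q r | rank v < n} := by
        ext w
        simp only [Set.mem_ofPred_eq, Set.mem_insert_iff, ← rank_injective.eq_iff, hv]
        omega
      rw [this]
      exact PD_insert (fun α ht => (rank_lt α).trans ht) ih (PD_singleton v)
    · have : {v : QV p q r | rank v < n + 1} = {v : QV p q r | rank v < n} := by
        ext w
        have : rank w ≠ n := fun hw => h ⟨w, hw⟩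
        simp only [Set.mem_ofPred_eq]
        omega
      rwa [this]

lemma hasProjectiveDimensionLT_three (M : ModuleCat.{max u w} (DirAlgebra K p q r)) :
    HasProjectiveDimensionLT M 3 := by
  refine PD_rank.{u, w} (2 + p + q + r) M fun v hv => ?_
  refine absurd ?_ hv
  cases v <;> simp only [Set.mem_ofPred_eq, rank] <;> omega

end Dimension

/-! ### Comparison of the two notions of `Ext` -/

/-- The derived functor `Ext` and the `Ext` groups defined through the derived category, which
underlie `HasProjectiveDimensionLT`, vanish together, as both are computed by the same complex built
from a projective resolution. -/
lemma subsingleton_Ext_of_hasProjectiveDimensionLT {k : Type*} [Ring k] {C : Type*} [Category* C]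
    [Abelian C] [Linear k C] [EnoughProjectives C] (X Y : C) (d n : ℕ)
    [HasProjectiveDimensionLT X d] (hn : d ≤ n) (hn0 : 0 < n) :
    Subsingleton (((Ext k C n).obj (Opposite.op X)).obj Y) := by
  obtain ⟨m, rfl⟩ : ∃ m, n = m + 1 := ⟨n - 1, by omega⟩
  let := HasExt.standard C
  let P := projectiveResolution X
  have hz : Limits.IsZero (((Ext k C (m + 1)).obj (Opposite.op X)).obj Y) := by
    refine Limits.IsZero.of_iso ?_ (P.isoExt (m + 1) Y)
    rw [← HomologicalComplex.exactAt_iff_isZero_homology,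
      HomologicalComplex.exactAt_iff' _ m (m + 1) (m + 2) (by simp) (by simp),
      ShortComplex.moduleCat_exact_iff]
    intro (f : P.complex.X (m + 1) ⟶ Y) hf
    have hf' : P.complex.d (m + 2) (m + 1) ≫ f = 0 := hf
    have h0 : P.extMk f (m + 2) rfl hf' = 0 :=
      Abelian.Ext.eq_zero_of_hasProjectiveDimensionLT _ d hn
    obtain ⟨g, hg⟩ := (P.extMk_eq_zero_iff f (m + 2) rfl hf' m rfl).1 h0
    exact ⟨g, hg⟩
  exact ModuleCat.subsingleton_of_isZero hz

end DirAlgebra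

/-- For any field `K` and `p, q, r ≥ 2`, the algebra `𝒜_{p,q,r}` has global dimension
at most `2`: for all left `𝒜_{p,q,r}`-modules `M`, `N` and all `n ≥ 3`,
`Extⁿ_{𝒜_{p,q,r}}(M, N) = 0`. -/
theorem statement9 (K : Type*) [Field K] (p q r : ℕ)
    (hp : 2 ≤ p) (hq : 2 ≤ q) (hr : 2 ≤ r)
    (M N : ModuleCat (DirAlgebra K p q r)) (n : ℕ) (hn : 3 ≤ n) :
    Subsingleton (((Ext K (ModuleCat (DirAlgebra K p q r)) n).obj
      (Opposite.op M)).obj N) := by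
  have := DirAlgebra.hasProjectiveDimensionLT_three M
  exact DirAlgebra.subsingleton_Ext_of_hasProjectiveDimensionLT M N 3 n hn (by omega)
end

section
/- Let K be a field and p, q, r ≥ 2, and let 𝒜_{p,q,r} = KQ⃗_{p,q,r}/I⃗_{p,q,r} be the quotient of the path algebra of the directed quiver Q⃗_{p,q,r} (the quiver Q_{p,q,r} with the arrows c₁, c₂, c₃ deleted) by the two-sided ideal generated by a₁b₂, a₂b₁, and a₁b₃ − a₂b₃. Then 𝒜_{p,q,r}, together with the images of the trivial paths e_v at its p+q+r−1 vertices, is a one-way algebra: it is finite-dimensional and indecomposable, dim_K(e_v 𝒜 e_v) = 1 for every vertex v, and for any two distinct vertices v ≠ w, if e_v 𝒜 e_w ≠ 0 then e_w 𝒜 e_v = 0. -/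
/-- The image in `𝒜_{p,q,r}` of the trivial path `e_v` at the vertex `v`. -/
noncomputable def eIdem (K : Type*) [Field K] (p q r : ℕ) (v : QV p q r) :
    DirAlgebra K p q r :=
  RingQuot.mkAlgHom K (Drel K p q r) (Ev K v)

namespace DirAlg

/-! ### Heights and finiteness of the quiver -/

/-- The height of a vertex: the length of the longest path of the quiver ending there. -/
def height {p q r : ℕ} : QV p q r → ℕ
  | .A => 0
  | .B => 1
  | .P i => i + 2
  | .Q i => i + 2
  | .R i => i + 2

lemma height_lt {p q r : ℕ} {u v : QV p q r} (α : DArrow p q r u v) :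
    height u < height v := by
  cases α <;> simp [height]

lemma height_bound {p q r : ℕ} (v : QV p q r) : height v < p + q + r + 2 := by
  rcases v with _ | _ | i | i | i <;> simp only [height] <;> omega

/-- Tells `a₁` apart from all other arrows; together with its endpoints this determines
an arrow. -/
def isA1 {p q r : ℕ} {u v : QV p q r} : DArrow p q r u v → Bool
  | .a1 => true
  | _ => false

lemma isA1_injective {p q r : ℕ} (u v : QV p q r) :
    Function.Injective (isA1 : DArrow p q r u v → Bool) := by
  intro α β h
  cases α <;> cases β <;> simp_all [isA1]

instance finite_arrow {p q r : ℕ} (u v : QV p q r) : Finite (DArrow p q r u v) :=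
  Finite.of_injective _ (isA1_injective u v)

variable (K : Type*) [Field K] {p q r : ℕ}

/-! ### Relations in the quotient -/

/-- The image in `𝒜_{p,q,r}` of an arrow. -/
noncomputable def ar {u v : QV p q r} (α : DArrow p q r u v) : DirAlgebra K p q r :=
  RingQuot.mkAlgHom K (Drel K p q r) (Av K α)

local notation "e" => eIdem K p q r

lemma e_idem (v : QV p q r) : e v * e v = e v := by
  simpa [eIdem] using RingQuot.mkAlgHom_rel K (Drel.idem (K := K) v)

lemma e_orth {v w : QV p q r} (h : v ≠ w) : e v * e w = 0 := by
  simpa [eIdem] using RingQuot.mkAlgHom_rel K (Drel.orth (K := K) v w h)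

lemma e_sum : ∑ v : QV p q r, e v = 1 := by
  simpa [eIdem] using RingQuot.mkAlgHom_rel K (Drel.total (K := K) (p := p) (q := q) (r := r))

lemma e_ar_e {u v : QV p q r} (α : DArrow p q r u v) : e u * ar K α * e v = ar K α := by
  simpa [eIdem, ar] using RingQuot.mkAlgHom_rel K (Drel.comp (K := K) α)

lemma e_ar {u v : QV p q r} (α : DArrow p q r u v) : e u * ar K α = ar K α := by
  rw [← e_ar_e K α, ← mul_assoc, ← mul_assoc, e_idem]

lemma ar_e {u v : QV p q r} (α : DArrow p q r u v) : ar K α * e v = ar K α := by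
  conv_rhs => rw [← e_ar_e K α]
  conv_lhs => rw [← e_ar_e K α]
  rw [mul_assoc, e_idem]

lemma e_ar_ne {u v w : QV p q r} (α : DArrow p q r u v) (h : w ≠ u) : e w * ar K α = 0 := by
  rw [← e_ar K α, ← mul_assoc, e_orth K h, zero_mul]

lemma ar_e_ne {u v w : QV p q r} (α : DArrow p q r u v) (h : v ≠ w) : ar K α * e w = 0 := by
  rw [← ar_e K α, mul_assoc, e_orth K h, mul_zero]

/-- Induction over the quotient algebra from scalars, trivial paths and arrows. -/
lemma induct {C : DirAlgebra K p q r → Prop}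
    (hc : ∀ c : K, C (algebraMap K _ c)) (he : ∀ v, C (e v))
    (ha : ∀ {u v : QV p q r} (α : DArrow p q r u v), C (ar K α))
    (hmul : ∀ x y, C x → C y → C (x * y)) (hadd : ∀ x y, C x → C y → C (x + y))
    (x : DirAlgebra K p q r) : C x := by
  obtain ⟨x, rfl⟩ := RingQuot.mkAlgHom_surjective K (Drel K p q r) x
  induction x using FreeAlgebra.induction with
  | grade0 c => simpa using hc c
  | grade1 g =>
    cases g with
    | vert v => exact he v
    | arr α => exact ha α
  | mul x y hx hy => simpa using hmul _ _ hx hy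
  | add x y hx hy => simpa using hadd _ _ hx hy

/-! ### The spaces `e_v 𝒜 e_w` -/

lemma split_mul (v w : QV p q r) (x y : DirAlgebra K p q r) :
    e v * (x * y) * e w = ∑ u, (e v * x * e u) * (e u * y * e w) := by
  have h : ∀ u, (e v * x * e u) * (e u * y * e w) = e v * x * e u * (y * e w) := by
    intro u
    calc _ = e v * x * (e u * e u) * (y * e w) := by simp only [mul_assoc]
      _ = _ := by rw [e_idem]
  simp only [h]
  rw [← Finset.sum_mul, ← Finset.mul_sum, e_sum]
  simp only [mul_assoc, one_mul]

/-- `e_v x e_v` is a multiple of `e_v`, and for `v ≠ w`, `e_v x e_w` vanishes unless `v` is lower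
than `w`. -/
lemma corner (x : DirAlgebra K p q r) :
    (∀ v, ∃ c : K, e v * x * e v = c • e v) ∧
    (∀ v w, v ≠ w → ¬ height v < height w → e v * x * e w = 0) := by
  induction x using induct with
  | hc c =>
    refine ⟨fun v => ⟨c, ?_⟩, fun v w h _ => ?_⟩
    · rw [← Algebra.commutes, mul_assoc, e_idem, Algebra.smul_def]
    · rw [← Algebra.commutes, mul_assoc, e_orth K h, mul_zero]
  | he u =>
    refine ⟨fun v => ?_, fun v w h _ => ?_⟩
    · by_cases hv : v = u
      · subst hv
        exact ⟨1, by rw [e_idem, e_idem, one_smul]⟩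
      · exact ⟨0, by rw [e_orth K hv, zero_mul, zero_smul]⟩
    · by_cases hv : v = u
      · subst hv
        rw [e_idem, e_orth K h]
      · rw [e_orth K hv, zero_mul]
  | @ha u u' α =>
    have key : ∀ v w, ¬ height v < height w → e v * ar K α * e w = 0 := by
      intro v w hvw
      by_cases hv : v = u
      · by_cases hw : u' = w
        · subst hv hw
          exact absurd (height_lt α) hvw
        · rw [mul_assoc, ar_e_ne K α hw, mul_zero]
      · rw [e_ar_ne K α hv, zero_mul]
    exact ⟨fun v => ⟨0, by rw [key v v (lt_irrefl _), zero_smul]⟩, fun v w _ h => key v w h⟩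
  | hmul x y hx hy =>
    refine ⟨fun v => ?_, fun v w hvw hh => ?_⟩
    · obtain ⟨c, hc⟩ := hx.1 v
      obtain ⟨d, hd⟩ := hy.1 v
      refine ⟨c * d, ?_⟩
      rw [split_mul, Finset.sum_eq_single v, hc, hd, smul_mul_smul_comm, e_idem]
      · intro u _ huv
        by_cases h : height v < height u
        · rw [hy.2 u v huv (by omega), mul_zero]
        · rw [hx.2 v u huv.symm h, zero_mul]
      · simp
    · rw [split_mul]
      refine Finset.sum_eq_zero fun u _ => ?_
      by_cases hu : v = u
      · subst hu
        rw [hy.2 v w hvw hh, mul_zero]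
      by_cases h : height v < height u
      · rw [hy.2 u w (by rintro rfl; exact hh h) (by omega), mul_zero]
      · rw [hx.2 v u hu h, zero_mul]
  | hadd x y hx hy =>
    refine ⟨fun v => ?_, fun v w hvw hh => ?_⟩
    · obtain ⟨c, hc⟩ := hx.1 v
      obtain ⟨d, hd⟩ := hy.1 v
      exact ⟨c + d, by rw [mul_add, add_mul, hc, hd, add_smul]⟩
    · rw [mul_add, add_mul, hx.2 v w hvw hh, hy.2 v w hvw hh, add_zero]

/-! ### Finite-dimensionality -/

/-- The span of the arrows starting at `v`. -/
noncomputable def outArrows (v : QV p q r) : Submodule K (DirAlgebra K p q r) :=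
  Submodule.span K (Set.range fun α : (Σ w, DArrow p q r v w) => ar K α.2)

lemma outArrows_fg (v : QV p q r) : (outArrows K v).FG :=
  Submodule.fg_span (Set.finite_range _)

/-- `e_v 𝒜` is spanned by `e_v` and the right ideals generated by the arrows leaving `v`. -/
lemma e_mul_mem (v : QV p q r) (x : DirAlgebra K p q r) :
    e v * x ∈ Submodule.span K {e v} ⊔ outArrows K v * ⊤ := by
  -- The space on the right contains `e_v` and is stable under right multiplication.
  suffices h : ∀ t ∈ Submodule.span K {e v} ⊔ outArrows K v * ⊤,
      t * x ∈ Submodule.span K {e v} ⊔ outArrows K v * ⊤ from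
    h _ (Submodule.mem_sup_left (Submodule.mem_span_singleton_self _))
  have ideal : ∀ t ∈ outArrows K v * ⊤, ∀ y, t * y ∈ outArrows K v * ⊤ := by
    intro t ht y
    have := Submodule.mul_mem_mul ht (Submodule.mem_top (R := K) (x := y))
    rw [mul_assoc] at this
    exact Submodule.mul_le.2 (fun a ha b _ => Submodule.mul_mem_mul ha Submodule.mem_top) this
  have gen : ∀ g, e v * g ∈ Submodule.span K {e v} ⊔ outArrows K v * ⊤ →
      ∀ t ∈ Submodule.span K {e v} ⊔ outArrows K v * ⊤,
        t * g ∈ Submodule.span K {e v} ⊔ outArrows K v * ⊤ := by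
    intro g hg t ht
    obtain ⟨s, hs, t', ht', rfl⟩ := Submodule.mem_sup.1 ht
    obtain ⟨c, rfl⟩ := Submodule.mem_span_singleton.1 hs
    rw [add_mul, smul_mul_assoc]
    exact add_mem (Submodule.smul_mem _ _ hg) (Submodule.mem_sup_right (ideal _ ht' _))
  induction x using induct with
  | hc c =>
    intro t ht
    rw [← Algebra.commutes, ← Algebra.smul_def]
    exact Submodule.smul_mem _ _ ht
  | he u =>
    refine gen _ ?_
    by_cases h : v = u
    · subst h
      rw [e_idem]
      exact Submodule.mem_sup_left (Submodule.mem_span_singleton_self _)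
    · rw [e_orth K h]
      exact zero_mem _
  | @ha u w α =>
    refine gen _ ?_
    by_cases h : v = u
    · subst h
      rw [e_ar, ← mul_one (ar K α)]
      exact Submodule.mem_sup_right (Submodule.mul_mem_mul
        (Submodule.subset_span ⟨⟨w, α⟩, rfl⟩) Submodule.mem_top)
    · rw [e_ar_ne K α h]
      exact zero_mem _
  | hmul x y hx hy =>
    intro t ht
    rw [← mul_assoc]
    exact hy _ (hx _ ht)
  | hadd x y hx hy =>
    intro t ht
    rw [mul_add]
    exact add_mem (hx _ ht) (hy _ ht)

/-- Descending induction on the height: `n` bounds the distance of `v` from the top. -/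
lemma exists_fg (n : ℕ) : ∀ v : QV p q r, p + q + r + 2 ≤ height v + n →
    ∃ T : Submodule K (DirAlgebra K p q r), T.FG ∧ ∀ x, e v * x ∈ T := by
  induction n with
  | zero =>
    intro v hv
    have := height_bound v
    omega
  | succ n ih =>
    intro v hv
    choose! T hT hmem using ih
    let I : Finset (QV p q r) := Finset.univ.filter fun w => height v < height w
    have hI : ∀ w ∈ I, p + q + r + 2 ≤ height w + n := by
      intro w hw
      have := (Finset.mem_filter.1 hw).2
      omega
    refine ⟨Submodule.span K {e v} ⊔ outArrows K v * I.sup T, ?_, fun x => ?_⟩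
    · exact (Submodule.fg_span_singleton _).sup ((outArrows_fg K v).mul
        (Submodule.fg_finset_sup I T fun w hw => hT w (hI w hw)))
    · suffices h : outArrows K v * ⊤ ≤ outArrows K v * I.sup T from
        sup_le_sup_left h (Submodule.span K {e v}) (e_mul_mem K v x)
      refine Submodule.mul_le.2 fun a ha y _ => ?_
      induction ha using Submodule.span_induction with
      | mem a ha =>
        obtain ⟨⟨w, α⟩, rfl⟩ := ha
        have hw : w ∈ I := Finset.mem_filter.2 ⟨Finset.mem_univ _, height_lt α⟩
        have h1 : ar K α * (e w * y) ∈ outArrows K v * I.sup T :=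
          Submodule.mul_mem_mul (Submodule.subset_span ⟨⟨w, α⟩, rfl⟩)
            (Finset.le_sup (f := T) hw (hmem w (hI w hw) y))
        rwa [← mul_assoc, ar_e] at h1
      | zero => simp
      | add a b _ _ ha hb => rw [add_mul]; exact add_mem ha hb
      | smul c a _ ha => rw [smul_mul_assoc]; exact Submodule.smul_mem _ _ ha

lemma finiteDimensional : FiniteDimensional K (DirAlgebra K p q r) := by
  have h := fun v : QV p q r => exists_fg K (p + q + r + 2) v (Nat.le_add_left _ _)
  choose T hT hmem using h
  refine ⟨?_⟩
  have : (⊤ : Submodule K (DirAlgebra K p q r)) = Finset.univ.sup T := by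
    refine (eq_top_iff.2 fun x _ => ?_).symm
    rw [← one_mul x, ← e_sum, Finset.sum_mul]
    exact Submodule.sum_mem _ fun v _ => Finset.le_sup (f := T) (Finset.mem_univ v) (hmem v x)
  rw [this]
  exact Submodule.fg_finset_sup _ _ fun v _ => hT v

/-! ### Two-dimensional representations -/

/-- Values on generators of the representation `rep` attached to the pair `(u, v)`. -/
def repGen (u v : QV p q r) : DGen p q r → Matrix (Fin 2) (Fin 2) K
  | .vert w => !![if w = u then 1 else 0, 0; 0, if w = v then 1 else 0]
  | @DGen.arr _ _ _ s t _ => !![0, if s = u ∧ t = v then 1 else 0; 0, 0]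

/-- The representation attached to vertices `u`, `v`: for `u ≠ v` it sends `e_u`, `e_v` to the
diagonal matrix units, all arrows `u → v` to the upper off-diagonal one, and the other
generators to `0`; for `u = v` it sends `e_u` to `1` and the other generators to `0`. -/
noncomputable def rep (u v : QV p q r) :
    DirAlgebra K p q r →ₐ[K] Matrix (Fin 2) (Fin 2) K :=
  RingQuot.liftAlgHom K ⟨FreeAlgebra.lift K (repGen K u v), by
    intro x y h
    induction h with
    | idem w =>
      simp only [Ev, map_mul, FreeAlgebra.lift_ι_apply, repGen, Matrix.mul_fin_two]
      simp
    | orth w w' h =>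
      simp only [Ev, map_mul, map_zero, FreeAlgebra.lift_ι_apply, repGen, Matrix.mul_fin_two]
      ext i j
      fin_cases i <;> fin_cases j <;> simp <;> grind
    | total =>
      ext i j
      fin_cases i <;> fin_cases j <;> simp [Ev, repGen, Matrix.sum_apply]
    | comp α =>
      simp only [Ev, Av, map_mul, FreeAlgebra.lift_ι_apply, repGen, Matrix.mul_fin_two]
      ext i j
      fin_cases i <;> fin_cases j <;> simp
      grind
    | rel1 h =>
      simp only [Av, map_mul, map_zero, FreeAlgebra.lift_ι_apply, repGen, Matrix.mul_fin_two]
      ext i j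
      fin_cases i <;> fin_cases j <;> simp
    | rel2 h =>
      simp only [Av, map_mul, map_zero, FreeAlgebra.lift_ι_apply, repGen, Matrix.mul_fin_two]
      ext i j
      fin_cases i <;> fin_cases j <;> simp
    | rel3 h => simp [Av, repGen]⟩

lemma e_ne_zero (v : QV p q r) : e v ≠ 0 := by
  intro h
  have h1 := congrArg (rep K v v) h
  have h2 := congrFun (congrFun h1 0) 0
  simp [rep, eIdem, Ev, repGen] at h2

lemma ar_ne_zero {u v : QV p q r} (α : DArrow p q r u v) : ar K α ≠ 0 := by
  intro h
  have h1 := congrArg (rep K u v) h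
  have h2 := congrFun (congrFun h1 0) 1
  simp [rep, ar, Av, repGen] at h2

/-! ### Indecomposability -/

/-- The quiver is connected: a function on vertices that agrees at the two ends of each
arrow is constant. -/
lemma eq_of_arrows {X : Type*} (c : QV p q r → X)
    (h : ∀ {u v : QV p q r}, DArrow p q r u v → c u = c v) (v : QV p q r) : c v = c .B := by
  have hP : ∀ i (hi : i < p - 1), c (.P ⟨i, hi⟩) = c .B := by
    intro i
    induction i with
    | zero => intro hi; exact (h (.b1 hi)).symm
    | succ i ih => intro hi; rw [← h (.x i hi)]; exact ih _
  have hQ : ∀ i (hi : i < q - 1), c (.Q ⟨i, hi⟩) = c .B := by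
    intro i
    induction i with
    | zero => intro hi; exact (h (.b2 hi)).symm
    | succ i ih => intro hi; rw [← h (.y i hi)]; exact ih _
  have hR : ∀ i (hi : i < r - 1), c (.R ⟨i, hi⟩) = c .B := by
    intro i
    induction i with
    | zero => intro hi; exact (h (.b3 hi)).symm
    | succ i ih => intro hi; rw [← h (.z i hi)]; exact ih _
  rcases v with _ | _ | i | i | i
  · exact h .a1
  · rfl
  · exact hP i.1 i.2
  · exact hQ i.1 i.2
  · exact hR i.1 i.2

lemma central_idem (z : DirAlgebra K p q r) (hz : ∀ x, z * x = x * z) (hzz : z * z = z) :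
    z = 0 ∨ z = 1 := by
  choose c hc using (corner K z).1
  have hze : ∀ v, z * e v = c v • e v := by
    intro v
    rw [← hc v, ← hz, mul_assoc, e_idem]
  have harr : ∀ {u v : QV p q r}, DArrow p q r u v → c u = c v := by
    intro u v α
    have h1 : z * ar K α = c u • ar K α := by
      rw [← e_ar K α, ← mul_assoc, hze, smul_mul_assoc]
    have h2 : z * ar K α = c v • ar K α := by
      conv_lhs => rw [hz, ← ar_e K α, mul_assoc, ← hz, hze, mul_smul_comm, ar_e]
    exact smul_left_injective K (ar_ne_zero K α) (h1.symm.trans h2)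
  have hzc : z = c .B • 1 := by
    rw [← mul_one z, ← e_sum, Finset.mul_sum, Finset.smul_sum]
    exact Finset.sum_congr rfl fun v _ => by rw [hze, eq_of_arrows c harr v]
  have hcc : c .B * c .B = c .B := by
    refine smul_left_injective K (e_ne_zero K (p := p) (q := q) (r := r) .B) ?_
    show (c .B * c .B) • e .B = c .B • e .B
    rw [← hze, mul_smul, ← hze, ← mul_smul_comm, ← hze, ← mul_assoc, hzz]
  rcases IsIdempotentElem.iff_eq_zero_or_one.1 hcc with h | h
  · left; rw [hzc, h, zero_smul]
  · right; rw [hzc, h, one_smul]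

lemma finrank_corner (v : QV p q r) : Module.finrank K (LinearMap.range
    ((LinearMap.mulLeft K (e v)).comp (LinearMap.mulRight K (e v)))) = 1 := by
  have : LinearMap.range ((LinearMap.mulLeft K (e v)).comp (LinearMap.mulRight K (e v)))
      = Submodule.span K {e v} := by
    apply le_antisymm
    · rintro _ ⟨x, rfl⟩
      obtain ⟨c, hc⟩ := (corner K x).1 v
      refine Submodule.mem_span_singleton.2 ⟨c, ?_⟩
      simp [← hc, mul_assoc]
    · rw [Submodule.span_singleton_le_iff_mem]
      exact ⟨e v, by simp [e_idem]⟩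
  rw [this]
  exact finrank_span_singleton (e_ne_zero K v)

end DirAlg

/-- For any field `K` and `p, q, r ≥ 2`, the algebra `𝒜_{p,q,r}`, together with the images
of the trivial paths at its `p+q+r−1` vertices, is a one-way algebra: it is
finite-dimensional and indecomposable, the `e_v` form a complete set of more than one
orthogonal idempotents, `dim_K (e_v 𝒜 e_v) = 1` for every vertex `v`, and for distinct
vertices `v ≠ w`, if `e_v 𝒜 e_w ≠ 0` then `e_w 𝒜 e_v = 0`. -/
theorem statement10 (K : Type*) [Field K] (p q r : ℕ)
    (hp : 2 ≤ p) (hq : 2 ≤ q) (hr : 2 ≤ r) :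
    FiniteDimensional K (DirAlgebra K p q r) ∧
    1 < Fintype.card (QV p q r) ∧
    (∀ v, eIdem K p q r v * eIdem K p q r v = eIdem K p q r v) ∧
    (∀ v w, v ≠ w → eIdem K p q r v * eIdem K p q r w = 0) ∧
    (∑ v : QV p q r, eIdem K p q r v) = 1 ∧
    (∀ v, Module.finrank K (LinearMap.range
      ((LinearMap.mulLeft K (eIdem K p q r v)).comp
        (LinearMap.mulRight K (eIdem K p q r v)))) = 1) ∧
    (∀ v w, v ≠ w →
      (∃ x : DirAlgebra K p q r, eIdem K p q r v * x * eIdem K p q r w ≠ 0) →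
      ∀ x : DirAlgebra K p q r, eIdem K p q r w * x * eIdem K p q r v = 0) ∧
    (∀ z : DirAlgebra K p q r, (∀ x, z * x = x * z) → z * z = z → z = 0 ∨ z = 1) := by
  refine ⟨DirAlg.finiteDimensional K, ?_, DirAlg.e_idem K, fun v w h => DirAlg.e_orth K h,
    DirAlg.e_sum K, DirAlg.finrank_corner K, ?_, DirAlg.central_idem K⟩
  · exact Fintype.one_lt_card_iff.2 ⟨.A, .B, by simp⟩
  · rintro v w hvw ⟨x, hx⟩ y
    have hlt : DirAlg.height v < DirAlg.height w := by
      by_contra h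
      exact hx ((DirAlg.corner K x).2 v w hvw h)
    exact (DirAlg.corner K y).2 w v hvw.symm (by omega)
end
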